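/- arXiv:1105.5910 — 3 statements merged into one kernel-verified Lean document; each statement's English description precedes it below -/
import Mathlib

section
/- Let λ be a partition and let k be an integer with 1 ≤ k ≤ λ_1. Then the following identity holds in the rational function field ℚ(q, y): (1/(q^{λ_1} y − 1)) · ∏_{i=1}^{λ'_k} (q^{λ_i − i + 1} y − 1)/(q^{λ_i − i} y − 1) = (1/(q^{−λ'_k + k − 1} y − 1)) · ∏_{j=k}^{λ_1} (q^{−λ'_j + j − 1} y − 1)/(q^{−λ'_j + j} y − 1). -/
/-- A partition, encoded as a weakly decreasing, eventually-zero sequence of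
natural numbers; `parts i` is the `(i+1)`-st part `λ_{i+1}` (0-indexed rows). -/
structure Ptn where
  parts : ℕ → ℕ
  antitone' : Antitone parts
  eventually_zero : ∃ N, ∀ i, N ≤ i → parts i = 0

namespace Ptn

/-- `conj p k` is the conjugate-partition part `λ'_{k+1} = #{i ≥ 1 : λ_i ≥ k+1}`. -/
noncomputable def conj (p : Ptn) (k : ℕ) : ℕ := Nat.card {i : ℕ // k < p.parts i}

/-- `|λ| = Σ_{i ≥ 1} λ_i`. -/
noncomputable def size (p : Ptn) : ℕ := ∑ᶠ i, p.parts i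

/-- `n(λ) = Σ_{i ≥ 1} (i-1) λ_i`. -/
noncomputable def nn (p : Ptn) : ℕ := ∑ᶠ i, i * p.parts i

/-- The empty partition. -/
def empty : Ptn := ⟨fun _ => 0, fun _ _ _ => le_rfl, ⟨0, fun _ _ => rfl⟩⟩

end Ptn

/-- The generalised hook length `h_{i,j}^{λ,μ} = λ_i - i + μ'_j - j + 1`, for the node
in (0-indexed) row `i` and column `j`, i.e. the 1-indexed node `(i+1, j+1)`. -/
noncomputable def ghook (lam mu : Ptn) (i j : ℕ) : ℤ :=
  (lam.parts i : ℤ) - (i + 1) + (mu.conj j : ℤ) - (j + 1) + 1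

/-- The rational function field `ℚ(q, y)` in two indeterminates. -/
noncomputable abbrev Kqy : Type := FractionRing (MvPolynomial (Fin 2) ℚ)

/-- The indeterminate `q` of `ℚ(q, y)`. -/
noncomputable def qv : Kqy := algebraMap (MvPolynomial (Fin 2) ℚ) Kqy (MvPolynomial.X 0)

/-- The indeterminate `y` of `ℚ(q, y)`. -/
noncomputable def yv : Kqy := algebraMap (MvPolynomial (Fin 2) ℚ) Kqy (MvPolynomial.X 1)

/-!
Put `f n = q ^ n * y - 1`, which never vanishes, number rows and columns from `0`, and write `c j`
for the length of column `j`. The rows of length `j + 1` are exactly those with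
`c (j + 1) ≤ i < c j`; on them `λ_i - i` drops by one from each row to the next, so their factors
telescope to `f (j + 1 - c (j + 1)) / f (j + 1 - c j)`. This is the factor
`f (j - c j) / f (j + 1 - c j)` of column `j` times `g (j + 1) / g j`, where `g j = f (j - c j)`,
and the product of the latter over the columns from `k` on telescopes to `f λ_0 / f (k - c k)`.
-/

theorem prod_Ico_div_succ {G : Type*} [CommGroup G] (g : ℕ → G) {m n : ℕ} (hmn : m ≤ n) :
    ∏ i ∈ Finset.Ico m n, g i / g (i + 1) = g m / g n := by
  simpa only [inv_div_inv] using Finset.prod_Ico_div (f := fun i => (g i)⁻¹) hmn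

theorem prod_Ico_prod_Ico_of_antitone {M : Type*} [CommMonoid M] {c : ℕ → ℕ} (hc : Antitone c)
    (g : ℕ → M) {m n : ℕ} (hmn : m ≤ n) :
    ∏ j ∈ Finset.Ico m n, ∏ i ∈ Finset.Ico (c (j + 1)) (c j), g i
      = ∏ i ∈ Finset.Ico (c n) (c m), g i := by
  induction n, hmn using Nat.le_induction with
  | base => simp
  | succ n hmn ih =>
    rw [Finset.prod_Ico_succ_top hmn, ih, mul_comm,
      Finset.prod_Ico_consecutive _ (hc n.le_succ) (hc hmn)]

theorem lt_card_iff_of_isLowerSet {s : Set ℕ} (hs : IsLowerSet s) (hfin : s.Finite) {i : ℕ} :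
    i < Nat.card s ↔ i ∈ s := by
  obtain rfl | ⟨n, rfl⟩ := hs.eq_univ_or_Iio
  · exact absurd hfin Set.infinite_univ
  · simp

namespace Ptn

variable (p : Ptn)

theorem finite_setOf_lt_parts (k : ℕ) : {i | k < p.parts i}.Finite := by
  obtain ⟨N, hN⟩ := p.eventually_zero
  refine (Set.finite_Iio N).subset fun i (hi : k < p.parts i) => ?_
  by_contra hNi
  exact Nat.not_lt_zero k (hN i (not_lt.mp hNi) ▸ hi)

theorem lt_conj_iff {k i : ℕ} : i < p.conj k ↔ k < p.parts i :=
  lt_card_iff_of_isLowerSet (s := {i | k < p.parts i})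
    (fun _ _ hji hi => hi.trans_le (p.antitone' hji)) (p.finite_setOf_lt_parts k)

theorem conj_antitone : Antitone p.conj := fun _ _ hkl =>
  le_of_forall_lt fun _ hi => p.lt_conj_iff.mpr (hkl.trans_lt (p.lt_conj_iff.mp hi))

theorem conj_parts_zero : p.conj (p.parts 0) = 0 :=
  Nat.eq_zero_of_not_pos fun h => lt_irrefl _ (p.lt_conj_iff.mp h)

theorem parts_eq_succ_of_mem_Ico {i j : ℕ} (hi : i ∈ Finset.Ico (p.conj (j + 1)) (p.conj j)) :
    p.parts i = j + 1 := by
  rw [Finset.mem_Ico, ← not_lt, lt_conj_iff, lt_conj_iff] at hi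
  omega

theorem prod_range_conj {M : Type*} [CommMonoid M] (g : ℕ → M) {k : ℕ} (hk : k ≤ p.parts 0) :
    ∏ i ∈ Finset.range (p.conj k), g i
      = ∏ j ∈ Finset.Ico k (p.parts 0), ∏ i ∈ Finset.Ico (p.conj (j + 1)) (p.conj j), g i := by
  rw [prod_Ico_prod_Ico_of_antitone p.conj_antitone g hk, p.conj_parts_zero, Finset.range_eq_Ico]

section CommGroup

variable {G : Type*} [CommGroup G] (f : ℤ → G)

theorem prod_rows_of_length_succ (j : ℕ) :
    ∏ i ∈ Finset.Ico (p.conj (j + 1)) (p.conj j),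
        f ((p.parts i : ℤ) - i) / f ((p.parts i : ℤ) - i - 1)
      = f (j + 1 - p.conj (j + 1)) / f (j + 1 - p.conj j) := by
  rw [← prod_Ico_div_succ (fun i : ℕ => f (j + 1 - i)) (p.conj_antitone j.le_succ)]
  refine Finset.prod_congr rfl fun i hi => ?_
  rw [p.parts_eq_succ_of_mem_Ico hi]
  push_cast
  rw [sub_sub _ (i : ℤ) 1]

theorem prod_rows_eq_prod_columns {k : ℕ} (hk : k ≤ p.parts 0) :
    (f (p.parts 0))⁻¹ *
      ∏ i ∈ Finset.range (p.conj k), f ((p.parts i : ℤ) - i) / f ((p.parts i : ℤ) - i - 1)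
    = (f (k - p.conj k))⁻¹ *
      ∏ j ∈ Finset.Ico k (p.parts 0), f (j - p.conj j) / f (j + 1 - p.conj j) := by
  let g (j : ℕ) : G := f (j - p.conj j)
  have hrim : ∏ j ∈ Finset.Ico k (p.parts 0), g (j + 1) / g j
      = f (p.parts 0) / f (k - p.conj k) := by
    simp only [Finset.prod_Ico_div g hk, g, p.conj_parts_zero, Nat.cast_zero, sub_zero]
  have hrows :
      ∏ i ∈ Finset.range (p.conj k), f ((p.parts i : ℤ) - i) / f ((p.parts i : ℤ) - i - 1)
        = (∏ j ∈ Finset.Ico k (p.parts 0), g (j + 1) / g j) *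
          ∏ j ∈ Finset.Ico k (p.parts 0), f (j - p.conj j) / f (j + 1 - p.conj j) := by
    rw [p.prod_range_conj _ hk, ← Finset.prod_mul_distrib]
    refine Finset.prod_congr rfl fun j _ => ?_
    rw [prod_rows_of_length_succ, div_mul_div_cancel]
    simp only [g, Nat.cast_succ]
  rw [hrows, hrim, div_eq_mul_inv, mul_assoc, inv_mul_cancel_left]

end CommGroup

end Ptn

theorem stmt1_general {G₀ : Type*} [CommGroupWithZero G₀] (f : ℤ → G₀) (hf : ∀ n, f n ≠ 0)
    (p : Ptn) (k : ℕ) (hk1 : 1 ≤ k) (hk2 : k ≤ p.parts 0 + 1) :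
    (f (p.parts 0))⁻¹ *
      ∏ i ∈ Finset.range (p.conj (k - 1)), f ((p.parts i : ℤ) - i) / f ((p.parts i : ℤ) - i - 1)
    = (f (-(p.conj (k - 1) : ℤ) + k - 1))⁻¹ *
      ∏ j ∈ Finset.Icc k (p.parts 0),
        f (-(p.conj (j - 1) : ℤ) + j - 1) / f (-(p.conj (j - 1) : ℤ) + j) := by
  obtain ⟨k, rfl⟩ := Nat.exists_eq_add_of_le' hk1
  lift f to ℤ → G₀ˣ using fun n => (hf n).isUnit
  have hsucc (a b : ℕ) : -(a : ℤ) + (b + 1) = b + 1 - a := by ring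
  have hpred (a b : ℕ) : (b : ℤ) + 1 - a - 1 = b - a := by ring
  rw [← Finset.Ico_add_one_right_eq_Icc, ← Finset.prod_Ico_add' _ k (p.parts 0) 1]
  simp only [Nat.add_sub_cancel, Nat.cast_succ, hsucc, hpred]
  exact_mod_cast congrArg Units.val (p.prod_rows_eq_prod_columns f (Nat.le_of_succ_le_succ hk2))

theorem X_pow_mul_X_ne_X_pow {σ R : Type*} [CommSemiring R] [Nontrivial R] {i j : σ} (hij : i ≠ j)
    (a b : ℕ) :
    (MvPolynomial.X i ^ a * MvPolynomial.X j : MvPolynomial σ R) ≠ MvPolynomial.X i ^ b := by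
  classical
  intro h
  simpa [hij.symm] using congrArg (MvPolynomial.eval (Pi.single i 1)) h

theorem qv_ne_zero : qv ≠ 0 := by
  simp [qv, MvPolynomial.X_ne_zero]

theorem qv_pow_mul_yv_ne_qv_pow (a b : ℕ) : qv ^ a * yv ≠ qv ^ b := by
  simp only [qv, yv, ← map_pow, ← map_mul]
  exact (IsFractionRing.injective _ Kqy).ne (X_pow_mul_X_ne_X_pow zero_ne_one a b)

theorem qv_zpow_mul_yv_sub_one_ne_zero (n : ℤ) : qv ^ n * yv - 1 ≠ 0 := by
  rw [sub_ne_zero, ← n.toNat_sub_toNat_neg, zpow_sub₀ qv_ne_zero, zpow_natCast, zpow_natCast,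
    div_mul_eq_mul_div, ne_eq, div_eq_one_iff_eq (pow_ne_zero _ qv_ne_zero)]
  exact qv_pow_mul_yv_ne_qv_pow _ _

/-- For a partition `λ` and `1 ≤ k ≤ λ_1`, the identity in `ℚ(q,y)`:
`(q^{λ_1} y - 1)⁻¹ ∏_{i=1}^{λ'_k} (q^{λ_i-i+1}y-1)/(q^{λ_i-i}y-1)
  = (q^{-λ'_k+k-1} y - 1)⁻¹ ∏_{j=k}^{λ_1} (q^{-λ'_j+j-1}y-1)/(q^{-λ'_j+j}y-1)`. -/
theorem stmt1 (p : Ptn) (k : ℕ) (hk1 : 1 ≤ k) (hk2 : k ≤ p.parts 0) :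
    (qv ^ (p.parts 0 : ℤ) * yv - 1)⁻¹ *
      ∏ i ∈ Finset.range (p.conj (k - 1)),
        (qv ^ ((p.parts i : ℤ) - i) * yv - 1) /
          (qv ^ ((p.parts i : ℤ) - i - 1) * yv - 1)
    = (qv ^ (-(p.conj (k - 1) : ℤ) + k - 1) * yv - 1)⁻¹ *
      ∏ j ∈ Finset.Icc k (p.parts 0),
        (qv ^ (-(p.conj (j - 1) : ℤ) + j - 1) * yv - 1) /
          (qv ^ (-(p.conj (j - 1) : ℤ) + j) * yv - 1) :=
  stmt1_general (fun n => qv ^ n * yv - 1) qv_zpow_mul_yv_sub_one_ne_zero p k hk1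
    (Nat.le_succ_of_le hk2)
end

section
/- For any two partitions λ and μ, X(λ, μ; Q_s, Q_t) = X(μ, λ; Q_t, Q_s) in the rational function field ℚ(q, Q_s, Q_t); that is, the quantity X is symmetric under simultaneously exchanging the two partitions and the two parameters Q_s and Q_t. -/
/-- The rational function field `ℚ(q, Q_s, Q_t)` in three indeterminates. -/
noncomputable abbrev K3 : Type := FractionRing (MvPolynomial (Fin 3) ℚ)

/-- The indeterminate `q`. -/
noncomputable def q3 : K3 := algebraMap (MvPolynomial (Fin 3) ℚ) K3 (MvPolynomial.X 0)

/-- The indeterminate `Q_s`. -/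
noncomputable def Qs3 : K3 := algebraMap (MvPolynomial (Fin 3) ℚ) K3 (MvPolynomial.X 1)

/-- The indeterminate `Q_t`. -/
noncomputable def Qt3 : K3 := algebraMap (MvPolynomial (Fin 3) ℚ) K3 (MvPolynomial.X 2)

/-- The quantity `X(λ, μ; Q_s, Q_t) = ∏_{(i,j)∈[μ]} (q^{j-i} Q_t - Q_s) ·
∏_{(i,j)∈[λ]} ( (q^{j-i} Q_s - q^{μ_1} Q_t) ·
∏_{k=1}^{μ_1} (q^{j-i} Q_s - q^{k-1-μ'_k} Q_t)/(q^{j-i} Q_s - q^{k-μ'_k} Q_t) )`. -/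
noncomputable def Xst {K : Type*} [Field K] (q Qs Qt : K) (lam mu : Ptn) : K :=
  (∏ᶠ i, ∏ j ∈ Finset.range (mu.parts i), (q ^ ((j : ℤ) - (i : ℤ)) * Qt - Qs)) *
  ∏ᶠ i, ∏ j ∈ Finset.range (lam.parts i),
    ((q ^ ((j : ℤ) - (i : ℤ)) * Qs - q ^ (mu.parts 0 : ℤ) * Qt) *
      ∏ k ∈ Finset.range (mu.parts 0),
        (q ^ ((j : ℤ) - (i : ℤ)) * Qs - q ^ (((k : ℤ) + 1) - 1 - (mu.conj k : ℤ)) * Qt) /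
          (q ^ ((j : ℤ) - (i : ℤ)) * Qs - q ^ (((k : ℤ) + 1) - (mu.conj k : ℤ)) * Qt))

/-!
Fix a cell of `[λ]` of content `b`, put `x = q ^ b * Q_s` and `d n = x - q ^ n * Q_t`. Its factor in
`X(λ, μ; Q_s, Q_t)` is `d μ₁ * ∏ₖ (d (k - 1 - μ'ₖ) / d (k - μ'ₖ))`. Walking down the `k`-th column
of `μ` from the row above the diagram turns `d (k - 1) / d k` into `d (k - 1 - μ'ₖ) / d (k - μ'ₖ)`,
and the step through a cell of content `c` multiplies the ratio by
`d (c - 1) * d (c + 1) / d c ^ 2`. The starting ratios telescope along the row to `d 0 / d μ₁`, so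
the factor is
`(x - Q_t) * ∏_c ((x - q⁻¹ * y) * (x - q * y) / (x - y) ^ 2)`, where `y = q ^ c * Q_t` and `c` runs
over the contents of `[μ]`. As the fraction is symmetric in `x` and `y`, so is `X` under the
exchange.
-/

section YoungDiagramProducts

variable {M : Type*} [CommMonoid M] (μ : YoungDiagram)

theorem finprod_prod_range_rowLen (f : ℕ → ℕ → M) :
    ∏ᶠ i, ∏ j ∈ Finset.range (μ.rowLen i), f i j = ∏ c ∈ μ.cells, f c.1 c.2 := by
  have mulSupport_subset : (Function.mulSupport fun i => ∏ j ∈ Finset.range (μ.rowLen i), f i j) ⊆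
      Finset.range (μ.colLen 0) := by
    intro i hi
    obtain ⟨j, hj, -⟩ := Finset.exists_ne_one_of_prod_ne_one hi
    rw [Finset.coe_range, Set.mem_Iio, ← YoungDiagram.mem_iff_lt_colLen,
      YoungDiagram.mem_iff_lt_rowLen]
    exact (Nat.zero_le j).trans_lt (Finset.mem_range.mp hj)
  rw [finprod_eq_prod_of_mulSupport_subset _ mulSupport_subset]
  refine (Finset.prod_finset_product' _ _ _ fun ⟨i, j⟩ => ?_).symm
  simp only [YoungDiagram.mem_cells, Finset.mem_range, ← YoungDiagram.mem_iff_lt_rowLen,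
    ← YoungDiagram.mem_iff_lt_colLen]
  exact ⟨fun h => ⟨μ.up_left_mem le_rfl (Nat.zero_le j) h, h⟩, And.right⟩

theorem prod_range_prod_range_colLen (f : ℕ → ℕ → M) :
    ∏ j ∈ Finset.range (μ.rowLen 0), ∏ i ∈ Finset.range (μ.colLen j), f i j =
      ∏ c ∈ μ.cells, f c.1 c.2 := by
  refine (Finset.prod_finset_product_right' _ _ _ fun ⟨i, j⟩ => ?_).symm
  simp only [YoungDiagram.mem_cells, Finset.mem_range, ← YoungDiagram.mem_iff_lt_rowLen,
    ← YoungDiagram.mem_iff_lt_colLen]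
  exact ⟨fun h => ⟨μ.up_left_mem (Nat.zero_le i) le_rfl h, h⟩, And.right⟩

end YoungDiagramProducts

namespace Ptn

variable (p : Ptn)

theorem finite_setOf_lt_parts_s7 : {c : ℕ × ℕ | c.2 < p.parts c.1}.Finite := by
  obtain ⟨N, hN⟩ := p.eventually_zero
  refine (Set.finite_Iic (N, p.parts 0)).subset ?_
  rintro ⟨i, j⟩ hj
  have row_lt : i < N := by
    by_contra! hi
    exact Nat.not_lt_zero j (hN i hi ▸ hj)
  exact ⟨row_lt.le, hj.le.trans (p.antitone' (Nat.zero_le i))⟩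

/-- The Young diagram of a partition, whose cells `(i, j)` are the nodes of `[λ]` in 0-indexed
coordinates. It gives access to Mathlib's row and column lengths. -/
noncomputable def youngDiagram : YoungDiagram where
  cells := p.finite_setOf_lt_parts_s7.toFinset
  isLowerSet := by
    rintro ⟨i, j⟩ ⟨i', j'⟩ ⟨hi, hj⟩ h
    simp only [Set.Finite.coe_toFinset, Set.mem_ofPred_eq] at h ⊢
    exact (hj.trans_lt h).trans_le (p.antitone' hi)

theorem mem_youngDiagram {i j : ℕ} : (i, j) ∈ p.youngDiagram ↔ j < p.parts i := by
  simp [← YoungDiagram.mem_cells, youngDiagram]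

theorem rowLen_youngDiagram (i : ℕ) : p.youngDiagram.rowLen i = p.parts i :=
  eq_of_forall_lt_iff fun j => by rw [← YoungDiagram.mem_iff_lt_rowLen, mem_youngDiagram]

theorem colLen_youngDiagram (j : ℕ) : p.youngDiagram.colLen j = p.conj j := by
  have mem_range_colLen (i : ℕ) :
      i ∈ Finset.range (p.youngDiagram.colLen j) ↔ j < p.parts i := by
    rw [Finset.mem_range, ← YoungDiagram.mem_iff_lt_colLen, mem_youngDiagram]
  rw [conj, Nat.subtype_card _ mem_range_colLen, Finset.card_range]

end Ptn

/-- The content `j - i` of the cell in row `i` and column `j`. -/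
def content (c : ℕ × ℕ) : ℤ := c.2 - c.1

section ContentTelescoping

variable {G : Type*} [CommGroup G] (d : ℤ → G)

theorem div_sub_natCast_eq_mul_prod (j : ℤ) (n : ℕ) :
    d (j - n) / d (j + 1 - n) =
      d j / d (j + 1) * ∏ i ∈ Finset.range n, d (j - i - 1) * d (j - i + 1) / d (j - i) ^ 2 := by
  have ratio_succ (i : ℕ) : d (j - i - 1) * d (j - i + 1) / d (j - i) ^ 2 =
      d (j - (i + 1 : ℕ)) / d (j + 1 - (i + 1 : ℕ)) / (d (j - i) / d (j + 1 - i)) := by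
    rw [div_div_div_eq, show j - (i + 1 : ℕ) = j - i - 1 by push_cast; ring,
      show j + 1 - (i + 1 : ℕ) = j - i by push_cast; ring, show j + 1 - i = j - i + 1 by ring, sq]
  simp_rw [ratio_succ]
  simpa using Finset.eq_prod_range_div (fun i : ℕ => d (j - i) / d (j + 1 - i)) n

theorem mul_prod_div_colLen_eq_prod_cells (μ : YoungDiagram) :
    d (μ.rowLen 0) *
        ∏ j ∈ Finset.range (μ.rowLen 0), d (j - μ.colLen j) / d (j + 1 - μ.colLen j) =
      d 0 * ∏ c ∈ μ.cells,
        d (content c - 1) * d (content c + 1) / d (content c) ^ 2 := by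
  have prod_first_row :
      ∏ j ∈ Finset.range (μ.rowLen 0), d j / d (j + 1) = d 0 / d (μ.rowLen 0) := by
    simpa using Finset.prod_range_div' (fun j : ℕ => d j) (μ.rowLen 0)
  simp_rw [div_sub_natCast_eq_mul_prod, Finset.prod_mul_distrib, prod_first_row,
    prod_range_prod_range_colLen μ fun i j : ℕ =>
      d ((j : ℤ) - i - 1) * d ((j : ℤ) - i + 1) / d ((j : ℤ) - i) ^ 2]
  rw [← mul_assoc, mul_div_cancel]
  rfl

end ContentTelescoping

section Symmetry

variable {K : Type*} [Field K] {q : K}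

/-- The factor that a pair of cells, one of each partition, contributes to `Xst`. A cell of content
`c` in a partition with parameter `Q` enters as `q ^ c * Q`; these are the arguments `x`, `y`. -/
def pairFactor (q x y : K) : K := (x - q⁻¹ * y) * (x - q * y) / (x - y) ^ 2

theorem pairFactor_comm (hq : q ≠ 0) (x y : K) : pairFactor q x y = pairFactor q y x := by
  have numerator_comm : (x - q⁻¹ * y) * (x - q * y) = (y - q⁻¹ * x) * (y - q * x) := by
    linear_combination (y ^ 2 - x ^ 2) * inv_mul_cancel₀ hq
  rw [pairFactor, pairFactor, numerator_comm, sub_sq_comm]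

theorem mul_prod_div_conj_eq_prod_pairFactor (hq : q ≠ 0) {x Q : K} (hx : ∀ n : ℤ, x ≠ q ^ n * Q)
    (mu : Ptn) :
    (x - q ^ (mu.parts 0 : ℤ) * Q) *
      ∏ k ∈ Finset.range (mu.parts 0),
        (x - q ^ (((k : ℤ) + 1) - 1 - (mu.conj k : ℤ)) * Q) /
          (x - q ^ (((k : ℤ) + 1) - (mu.conj k : ℤ)) * Q) =
      (x - Q) * ∏ c ∈ mu.youngDiagram.cells, pairFactor q x (q ^ content c * Q) := by
  let d (n : ℤ) : Kˣ := Units.mk0 (x - q ^ n * Q) (sub_ne_zero.mpr (hx n))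
  have telescoped := congrArg Units.val (mul_prod_div_colLen_eq_prod_cells d mu.youngDiagram)
  simp only [d, Units.val_mul, Units.coe_prod, Units.val_div_eq_div_val, Units.val_pow_eq_pow_val,
    Units.val_mk0, mu.rowLen_youngDiagram, mu.colLen_youngDiagram, zpow_zero, one_mul,
    zpow_sub_one₀ hq, zpow_add_one₀ hq] at telescoped
  simpa [pairFactor, mul_comm, mul_left_comm, mul_assoc] using telescoped

theorem Xst_eq_prod_pairFactor {Qs Qt : K} (hq : q ≠ 0) (h : ∀ n : ℤ, q ^ n * Qs ≠ Qt)
    (lam mu : Ptn) :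
    Xst q Qs Qt lam mu =
      (∏ c ∈ mu.youngDiagram.cells, (q ^ content c * Qt - Qs)) *
        ((∏ b ∈ lam.youngDiagram.cells, (q ^ content b * Qs - Qt)) *
          ∏ b ∈ lam.youngDiagram.cells, ∏ c ∈ mu.youngDiagram.cells,
            pairFactor q (q ^ content b * Qs) (q ^ content c * Qt)) := by
  have zpow_mul_ne (m n : ℤ) : q ^ m * Qs ≠ q ^ n * Qt := by
    intro heq
    apply h (m - n)
    rw [zpow_sub₀ hq, div_mul_eq_mul_div, heq, mul_div_cancel_left₀ _ (zpow_ne_zero n hq)]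
  simp_rw [Xst, mul_prod_div_conj_eq_prod_pairFactor hq (zpow_mul_ne _), ← Ptn.rowLen_youngDiagram,
    ← Finset.prod_mul_distrib]
  congr 1 <;> exact finprod_prod_range_rowLen _ _

theorem stmt7_general {Qs Qt : K} (hq : q ≠ 0) (h : ∀ n : ℤ, q ^ n * Qs ≠ Qt) (lam mu : Ptn) :
    Xst q Qs Qt lam mu = Xst q Qt Qs mu lam := by
  have h_swap (n : ℤ) : q ^ n * Qt ≠ Qs := by
    rintro rfl
    exact h (-n) (by rw [zpow_neg, inv_mul_cancel_left₀ (zpow_ne_zero n hq)])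
  rw [Xst_eq_prod_pairFactor hq h, Xst_eq_prod_pairFactor hq h_swap, mul_left_comm,
    Finset.prod_comm]
  simp_rw [pairFactor_comm hq]

end Symmetry

theorem q3_ne_zero : q3 ≠ 0 := by
  simp [q3, MvPolynomial.X_ne_zero]

theorem q3_zpow_mul_Qs3_ne_Qt3 (n : ℤ) : q3 ^ n * Qs3 ≠ Qt3 := by
  intro heq
  have cleared : q3 ^ n.toNat * Qs3 = Qt3 * q3 ^ (-n).toNat := by
    rwa [← n.toNat_sub_toNat_neg, zpow_sub₀ q3_ne_zero, zpow_natCast, zpow_natCast,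
      div_mul_eq_mul_div, div_eq_iff (pow_ne_zero _ q3_ne_zero)] at heq
  simp only [q3, Qs3, Qt3, ← map_pow, ← map_mul] at cleared
  have polynomial_eq := IsFractionRing.injective (MvPolynomial (Fin 3) ℚ) K3 cleared
  simpa using congrArg (MvPolynomial.eval ![1, 0, 1]) polynomial_eq

/-- `X(λ, μ; Q_s, Q_t) = X(μ, λ; Q_t, Q_s)` in `ℚ(q, Q_s, Q_t)`. -/
theorem stmt7 (lam mu : Ptn) :
    Xst q3 Qs3 Qt3 lam mu = Xst q3 Qt3 Qs3 mu lam :=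
  stmt7_general q3_ne_zero q3_zpow_mul_Qs3_ne_Qt3 lam mu
end

section
/- Let h ≥ 1 and let μ^1, …, μ^h and ν^1, …, ν^h be finite multisets of positive rational numbers with |μ^i| = |ν^i| and μ^i ⊵ ν^i for each i = 1, …, h. Set μ := μ^1 ⊔ ⋯ ⊔ μ^h and ν := ν^1 ⊔ ⋯ ⊔ ν^h (disjoint union of multisets). Then μ ⊵ ν, and μ = ν (as multisets) only when μ^i = ν^i for all i = 1, …, h. -/
/-- The elements of a finite multiset of rationals, arranged in weakly decreasing order. -/
def sortedDesc (M : Multiset ℚ) : List ℚ := M.sort (· ≥ ·)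

/-- Dominance order for finite multisets of rationals (of the same cardinality):
`X ⊵ Y` iff every partial sum of the decreasing rearrangement of `X` is at least the
corresponding partial sum for `Y`. -/
def Dominates (X Y : Multiset ℚ) : Prop :=
  ∀ t : ℕ, ((sortedDesc Y).take t).sum ≤ ((sortedDesc X).take t).sum

/-!
For `t ≤ |M|`, the sum of the `t` largest elements of `M` is the minimum over `c` of
`t • c + excess c M`, where `excess c M` is the sum of `(x - c)⁺` over the elements `x` of `M`;
conversely, `excess c M` is the maximum over such `t` of that sum minus `t • c`. Hence, for
multisets of equal cardinality, dominance is the pointwise comparison of the excess functions.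
The excess is additive in the multiset, so these comparisons add up over a disjoint union, and
equality for the union forces equality for each summand.
-/

/-- The total excess `∑ (x - c)⁺` of the elements `x` of a multiset over the level `c`, bundled as
an additive homomorphism so that `map_add` and `map_sum` apply to it. -/
def excess {α : Type*} [AddCommGroup α] [LinearOrder α] (c : α) : Multiset α →+ α :=
  Multiset.sumAddMonoidHom.comp (Multiset.mapAddMonoidHom fun x => (x - c)⁺)

section Excess

variable {α : Type*} [AddCommGroup α] [LinearOrder α]

theorem excess_apply (c : α) (M : Multiset α) : excess c M = (M.map fun x => (x - c)⁺).sum :=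
  rfl

variable [IsOrderedAddMonoid α]

theorem excess_mono (c : α) : Monotone (excess c) := by
  intro A M hAM
  obtain ⟨B, rfl⟩ := Multiset.le_iff_exists_add.1 hAM
  have hB : 0 ≤ excess c B := Multiset.sum_nonneg <| by simp [posPart_nonneg]
  rw [map_add]
  exact le_add_of_nonneg_right hB

theorem sum_le_card_nsmul_add_excess {A M : Multiset α} (hAM : A ≤ M) (c : α) :
    A.sum ≤ A.card • c + excess c M :=
  calc A.sum = A.card • c + (A.map fun x => x - c).sum := by simp
    _ ≤ A.card • c + excess c A := by
      gcongr
      exact Multiset.sum_map_le_sum_map _ _ fun x _ => le_posPart (x - c)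
    _ ≤ A.card • c + excess c M := by
      gcongr
      exact excess_mono c hAM

theorem sum_eq_card_nsmul_add_excess_add {c : α} {A B : Multiset α} (hA : ∀ x ∈ A, c ≤ x)
    (hB : ∀ x ∈ B, x ≤ c) : A.sum = A.card • c + excess c (A + B) := by
  have hposA : ∀ x ∈ A, (x - c)⁺ = x - c := fun x hx => posPart_of_nonneg (sub_nonneg.2 (hA x hx))
  have hposB : ∀ x ∈ B, (x - c)⁺ = 0 := fun x hx => posPart_of_nonpos (sub_nonpos.2 (hB x hx))
  rw [map_add, excess_apply, excess_apply, Multiset.map_congr rfl hposA,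
    Multiset.map_congr rfl hposB]
  simp

theorem sum_filter_eq_card_nsmul_add_excess (c : α) (M : Multiset α) :
    (M.filter (c ≤ ·)).sum = (M.filter (c ≤ ·)).card • c + excess c M := by
  have hsplit := sum_eq_card_nsmul_add_excess_add (c := c) (A := M.filter (c ≤ ·))
    (B := M.filter fun x => ¬c ≤ x) (fun x hx => (Multiset.mem_filter.1 hx).2)
    fun x hx => (not_le.1 (Multiset.mem_filter.1 hx).2).le
  rwa [Multiset.filter_add_not] at hsplit

end Excess

section SortedList

variable {α : Type*} [LinearOrder α]

theorem exists_forall_take_ge_forall_drop_le [Nonempty α] {L : List α}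
    (hL : L.Pairwise (· ≥ ·)) (t : ℕ) :
    ∃ c, (∀ x ∈ L.take t, c ≤ x) ∧ ∀ x ∈ L.drop t, x ≤ c := by
  induction L generalizing t with
  | nil => simp
  | cons a L ih =>
    obtain ⟨ha, hL⟩ := List.pairwise_cons.1 hL
    cases t with
    | zero => exact ⟨a, by simpa using ha⟩
    | succ t =>
      obtain ⟨c, htake, hdrop⟩ := ih hL t
      refine ⟨min a c, ?_, fun x hx => le_min (ha x (List.mem_of_mem_drop hx)) (hdrop x hx)⟩
      simpa using fun x hx => Or.inr (htake x hx)

variable [AddCommGroup α] [IsOrderedAddMonoid α]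

theorem exists_sum_take_eq_length_nsmul_add_excess {L : List α} (hL : L.Pairwise (· ≥ ·))
    (t : ℕ) : ∃ c, (L.take t).sum = (L.take t).length • c + excess c (L : Multiset α) := by
  obtain ⟨c, htake, hdrop⟩ := exists_forall_take_ge_forall_drop_le hL t
  have hsplit := sum_eq_card_nsmul_add_excess_add (A := (L.take t : Multiset α))
    (B := (L.drop t : Multiset α)) htake hdrop
  rw [Multiset.coe_add, List.take_append_drop] at hsplit
  exact ⟨c, hsplit⟩

theorem sum_le_sum_take_card {L : List α} (hL : L.Pairwise (· ≥ ·)) {A : Multiset α}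
    (hA : A ≤ L) : A.sum ≤ (L.take A.card).sum := by
  obtain ⟨c, hc⟩ := exists_sum_take_eq_length_nsmul_add_excess hL A.card
  rw [hc, List.length_take_of_le (Multiset.card_le_card hA)]
  exact sum_le_card_nsmul_add_excess hA c

end SortedList

theorem coe_sortedDesc (M : Multiset ℚ) : (sortedDesc M : Multiset ℚ) = M :=
  Multiset.sort_eq M _

theorem length_sortedDesc (M : Multiset ℚ) : (sortedDesc M).length = M.card :=
  Multiset.length_sort _

theorem pairwise_sortedDesc (M : Multiset ℚ) : (sortedDesc M).Pairwise (· ≥ ·) :=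
  Multiset.pairwise_sort M _

theorem coe_take_sortedDesc_le (M : Multiset ℚ) (t : ℕ) :
    ((sortedDesc M).take t : Multiset ℚ) ≤ M :=
  (Multiset.coe_le.2 (List.take_sublist t _).subperm).trans_eq (coe_sortedDesc M)

namespace Dominates

variable {X Y : Multiset ℚ}

theorem excess_le (hXY : Dominates X Y) (hcard : X.card = Y.card) (c : ℚ) :
    excess c Y ≤ excess c X := by
  set A := Y.filter (c ≤ ·)
  have hAY : A ≤ Y := Multiset.filter_le _ Y
  have hlen : ((sortedDesc X).take A.card).length = A.card := by
    rw [List.length_take_of_le]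
    exact (Multiset.card_le_card hAY).trans_eq (hcard.symm.trans (length_sortedDesc X).symm)
  refine le_of_add_le_add_left (a := A.card • c) ?_
  calc A.card • c + excess c Y = A.sum := (sum_filter_eq_card_nsmul_add_excess c Y).symm
    _ ≤ ((sortedDesc Y).take A.card).sum :=
      sum_le_sum_take_card (pairwise_sortedDesc Y) (hAY.trans_eq (coe_sortedDesc Y).symm)
    _ ≤ ((sortedDesc X).take A.card).sum := hXY A.card
    _ ≤ A.card • c + excess c X := by
      simpa [hlen] using sum_le_card_nsmul_add_excess (coe_take_sortedDesc_le X A.card) c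

theorem of_excess_le (hcard : X.card = Y.card) (h : ∀ c, excess c Y ≤ excess c X) :
    Dominates X Y := by
  intro t
  have hlen : ((sortedDesc Y).take t).length = ((sortedDesc X).take t).length := by
    simp only [List.length_take, length_sortedDesc, hcard]
  obtain ⟨c, hc⟩ := exists_sum_take_eq_length_nsmul_add_excess (pairwise_sortedDesc X) t
  rw [coe_sortedDesc] at hc
  calc ((sortedDesc Y).take t).sum ≤ ((sortedDesc Y).take t).length • c + excess c Y :=
        sum_le_card_nsmul_add_excess (coe_take_sortedDesc_le Y t) c
    _ ≤ ((sortedDesc X).take t).length • c + excess c X := by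
      rw [hlen]
      gcongr
      exact h c
    _ = ((sortedDesc X).take t).sum := hc.symm

theorem antisymm (hXY : Dominates X Y) (hYX : Dominates Y X) (hcard : X.card = Y.card) :
    X = Y := by
  have hlen : (sortedDesc X).length = (sortedDesc Y).length := by
    simpa only [length_sortedDesc] using hcard
  have hsort : sortedDesc X = sortedDesc Y :=
    List.eq_of_sum_take_eq hlen fun t _ => le_antisymm (hYX t) (hXY t)
  rw [← coe_sortedDesc X, hsort, coe_sortedDesc]

end Dominates

theorem stmt13_general {ι : Type*} (s : Finset ι) (μ ν : ι → Multiset ℚ)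
    (hcard : ∀ i ∈ s, (μ i).card = (ν i).card) (hdom : ∀ i ∈ s, Dominates (μ i) (ν i)) :
    Dominates (∑ i ∈ s, μ i) (∑ i ∈ s, ν i) ∧
      (∑ i ∈ s, μ i = ∑ i ∈ s, ν i → ∀ i ∈ s, μ i = ν i) := by
  have hle : ∀ c, ∀ i ∈ s, excess c (ν i) ≤ excess c (μ i) := fun c i hi =>
    (hdom i hi).excess_le (hcard i hi) c
  constructor
  · refine .of_excess_le ?_ fun c => ?_
    · simpa only [Multiset.card_sum] using Finset.sum_congr rfl hcard
    · simpa only [map_sum] using Finset.sum_le_sum (hle c)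
  · intro hsum i hi
    have heq : ∀ c, excess c (ν i) = excess c (μ i) := fun c =>
      (Finset.sum_eq_sum_iff_of_le (hle c)).1 (by rw [← map_sum, ← map_sum, hsum]) i hi
    have hdom' : Dominates (ν i) (μ i) := .of_excess_le (hcard i hi).symm fun c => (heq c).ge
    exact (hdom i hi).antisymm hdom' (hcard i hi)

/-- Let `h ≥ 1` and let `μ^1, …, μ^h` and `ν^1, …, ν^h` be finite
multisets of positive rationals with `|μ^i| = |ν^i|` and `μ^i ⊵ ν^i` for each `i`.
Then `μ^1 ⊔ ⋯ ⊔ μ^h ⊵ ν^1 ⊔ ⋯ ⊔ ν^h`, with equality (as multisets) only when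
`μ^i = ν^i` for all `i`. -/
theorem stmt13 (h : ℕ) (hh : 1 ≤ h) (μ ν : Fin h → Multiset ℚ)
    (hμpos : ∀ i, ∀ x ∈ μ i, 0 < x) (hνpos : ∀ i, ∀ x ∈ ν i, 0 < x)
    (hcard : ∀ i, Multiset.card (μ i) = Multiset.card (ν i))
    (hdom : ∀ i, Dominates (μ i) (ν i)) :
    Dominates (∑ i, μ i) (∑ i, ν i) ∧
      ((∑ i, μ i) = (∑ i, ν i) → ∀ i, μ i = ν i) := by
  simpa using stmt13_general Finset.univ μ ν (fun i _ => hcard i) fun i _ => hdom i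
end
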